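/- arXiv:2312.04762 — 2 statements merged into one kernel-verified Lean document; each statement's English description precedes it below -/
import Mathlib

section
/- Let $G$ be a finite simple connected graph on $n \ge 2$ vertices with combinatorial Laplacian eigenvalues $0 = \lambda_1 < \lambda_2 \le \cdots \le \lambda_n$ (listed with multiplicity). Then the number of spanning trees of $G$ equals $\frac{1}{n} \prod_{k=2}^{n} \lambda_k$. -/
open Finset

/-!
Fix a root `r` of a finite graph `G`.  Row `i` of the Laplacian is the sum of `e_i - e_j` over the
neighbours `j` of `i`, so expanding the `(r, r)` minor multilinearly in its rows writes it as a sum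
over all choices `f` of a neighbour `f i` for each `i ≠ r`.  The determinant attached to `f` is `1`
if iterating `f` leads every vertex to `r` (the matrix is then unitriangular with respect to the
distance to `r`), and `0` otherwise (the indicator function of the vertices that never reach `r`
lies in the kernel).  The surviving `f` are exactly the spanning trees of `G` oriented towards `r`.

Summing over `r`, the number of spanning trees times the number of vertices is the trace of the
adjugate of the Laplacian, that is, the sum over `i` of the product of all eigenvalues but the
`i`-th one.  Only the term omitting an eigenvalue `0` survives.
-/

section Determinant

variable {V R : Type*} [Fintype V] [DecidableEq V] [CommRing R] {M : Matrix V V R}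

theorem det_smul_eq_zero_of_mulVec_eq_zero {v : V → R} (h : M.mulVec v = 0) : M.det • v = 0 := by
  rw [← Matrix.one_mulVec v, ← Matrix.smul_mulVec, ← Matrix.adjugate_mul, ← Matrix.mulVec_mulVec,
    h, Matrix.mulVec_zero]

theorem det_eq_one_of_diag_eq_one_of_lt {α : Type*} [LinearOrder α] (d : V → α)
    (hdiag : ∀ i, M i i = 1) (hlt : ∀ i j, i ≠ j → M i j ≠ 0 → d j < d i) : M.det = 1 := by
  have hM : M.BlockTriangular (OrderDual.toDual ∘ d) := fun i j hij =>
    by_contra fun h => lt_asymm hij (hlt i j (fun hij' => hij.ne (by rw [hij'])) h)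
  rw [hM.det]
  refine prod_eq_one fun a _ => ?_
  suffices M.toSquareBlock (OrderDual.toDual ∘ d) a = 1 by rw [this, Matrix.det_one]
  ext ⟨i, hi⟩ ⟨j, hj⟩
  rw [Matrix.toSquareBlock_def, Matrix.of_apply, Matrix.one_apply]
  split_ifs with hij
  · obtain rfl := Subtype.mk.inj hij
    exact hdiag i
  · have hd : d j = d i := hj.trans hi.symm
    exact by_contra fun h => (hlt i j (fun h' => hij (Subtype.ext h')) h).ne hd

end Determinant

/-- `f` is the parent map of a tree on `V` rooted at `r`: it moves every vertex one step towards
`r`.  The root has no parent and is made a fixed point. -/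
structure IsParentMap {V : Type*} (r : V) (f : V → V) : Prop where
  map_root : f r = r
  exists_iterate_eq_root : ∀ i, ∃ m, f^[m] i = r

/-- The graph underlying a rooted tree given by its parent map `f`: each vertex is joined to its
parent.  The fixed points of `f` contribute no edge. -/
def parentGraph {V : Type*} (f : V → V) : SimpleGraph V :=
  SimpleGraph.fromRel fun i j => f i = j

theorem parentGraph_adj {V : Type*} {f : V → V} {i j : V} :
    (parentGraph f).Adj i j ↔ i ≠ j ∧ (f i = j ∨ f j = i) :=
  SimpleGraph.fromRel_adj _ i j

namespace IsParentMap

variable {V : Type*} {r i : V} {f g : V → V}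

theorem of_map_lt (d : V → ℕ) (hr : f r = r) (hd : ∀ i ≠ r, d (f i) < d i) : IsParentMap r f where
  map_root := hr
  exists_iterate_eq_root i := by
    induction h : d i using Nat.strong_induction_on generalizing i with
    | _ k ih =>
      by_cases hi : i = r
      · exact ⟨0, hi⟩
      · obtain ⟨m, hm⟩ := ih _ (h ▸ hd i hi) (f i) rfl
        exact ⟨m + 1, hm⟩

theorem exists_map_lt (hf : IsParentMap r f) : ∃ d : V → ℕ, ∀ i ≠ r, d (f i) < d i := by
  classical
  refine ⟨fun i => Nat.find (hf.exists_iterate_eq_root i), fun i hi => ?_⟩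
  rw [Nat.lt_find_iff]
  intro m hm hmr
  cases m with
  | zero => exact hi hmr
  | succ m => exact Nat.find_min _ hm hmr

theorem parentGraph_le_iff (hf : IsParentMap r f) {G : SimpleGraph V} :
    parentGraph f ≤ G ↔ ∀ i ≠ r, G.Adj i (f i) := by
  constructor
  · intro hle i hi
    obtain ⟨d, hd⟩ := hf.exists_map_lt
    have hne : i ≠ f i := fun h => (hd i hi).ne (congrArg d h).symm
    exact hle (parentGraph_adj.2 ⟨hne, .inl rfl⟩)
  · intro hG
    have hadj : ∀ i, i ≠ f i → G.Adj i (f i) := fun i hi =>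
      hG i fun hir => hi (by rw [hir, hf.map_root])
    intro i j hij
    obtain ⟨hne, rfl | rfl⟩ := parentGraph_adj.1 hij
    · exact hadj i hne
    · exact (hadj j hne.symm).symm

theorem adj_map (hf : IsParentMap r f) (hi : i ≠ r) : (parentGraph f).Adj i (f i) :=
  hf.parentGraph_le_iff.1 le_rfl i hi

theorem map_map_ne (hf : IsParentMap r f) (hi : i ≠ r) : f (f i) ≠ i := by
  intro h
  obtain ⟨d, hd⟩ := hf.exists_map_lt
  have hfi : f i ≠ r := fun hfi => hi (by rw [← h, hfi, hf.map_root])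
  have hlt : d (f (f i)) < d i := (hd (f i) hfi).trans (hd i hi)
  exact hlt.ne (congrArg d h)

theorem induction {p : V → Prop} (hf : IsParentMap r f) (root : p r)
    (step : ∀ i ≠ r, p (f i) → p i) (i : V) : p i := by
  obtain ⟨m, hm⟩ := hf.exists_iterate_eq_root i
  induction m generalizing i with
  | zero => exact (show i = r from hm) ▸ root
  | succ m ih =>
    by_cases hi : i = r
    · exact hi ▸ root
    · exact step i hi (ih (f i) hm)

theorem connected_parentGraph (hf : IsParentMap r f) : (parentGraph f).Connected :=
  SimpleGraph.connected_iff_exists_forall_reachable _ |>.2 ⟨r, hf.induction .rfl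
    fun _ hi hreach => hreach.trans (hf.adj_map hi).reachable.symm⟩

theorem edgeSet_parentGraph_subset (hf : IsParentMap r f) :
    (parentGraph f).edgeSet ⊆ (fun i => s(i, f i)) '' {r}ᶜ := by
  set E : Set (Sym2 V) := (fun i => s(i, f i)) '' {r}ᶜ
  have hle : parentGraph f ≤ SimpleGraph.fromEdgeSet E := hf.parentGraph_le_iff.2 fun i hi =>
    (SimpleGraph.fromEdgeSet_adj E).2 ⟨⟨i, hi, rfl⟩, (hf.adj_map hi).ne⟩
  calc (parentGraph f).edgeSet ⊆ (SimpleGraph.fromEdgeSet E).edgeSet := SimpleGraph.edgeSet_mono hle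
    _ ⊆ E := by rw [SimpleGraph.edgeSet_fromEdgeSet]; exact Set.sdiff_subset

theorem isTree_parentGraph [Finite V] (hf : IsParentMap r f) : (parentGraph f).IsTree := by
  refine SimpleGraph.isTree_iff_connected_and_card.2 ⟨hf.connected_parentGraph,
    le_antisymm ?_ hf.connected_parentGraph.card_vert_le_card_edgeSet_add_one⟩
  calc Nat.card (parentGraph f).edgeSet + 1
      ≤ ((fun i => s(i, f i)) '' {r}ᶜ).ncard + 1 := by
        gcongr
        exact Set.ncard_le_ncard hf.edgeSet_parentGraph_subset
    _ ≤ ({r}ᶜ : Set V).ncard + 1 := by gcongr; exact Set.ncard_image_le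
    _ = Nat.card V := by rw [← Set.ncard_singleton r, add_comm, Set.ncard_add_ncard_compl]

theorem eq_of_parentGraph_eq (hf : IsParentMap r f) (hg : IsParentMap r g)
    (h : parentGraph f = parentGraph g) : f = g := by
  funext i
  induction i using hf.induction with
  | root => rw [hf.map_root, hg.map_root]
  | step i hi ih =>
    have hadj : (parentGraph g).Adj i (f i) := h ▸ hf.adj_map hi
    rcases (parentGraph_adj.1 hadj).2 with hgi | hgf
    · exact hgi.symm
    · exact absurd (ih.trans hgf) (hf.map_map_ne hi)

end IsParentMap

theorem exists_isParentMap_parentGraph_le {V : Type*} {G : SimpleGraph V} (hG : G.Connected)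
    (r : V) : ∃ f, IsParentMap r f ∧ parentGraph f ≤ G := by
  classical
  have hcloser : ∀ i ≠ r, ∃ j, G.Adj i j ∧ G.dist j r < G.dist i r := by
    intro i hi
    obtain ⟨p, hp⟩ := hG.exists_walk_length_eq_dist i r
    have hnil : ¬ p.Nil := SimpleGraph.Walk.not_nil_of_ne hi
    refine ⟨p.snd, p.adj_snd hnil, ?_⟩
    calc G.dist p.snd r ≤ p.tail.length := SimpleGraph.dist_le _
      _ < p.length := by rw [← p.length_tail_add_one hnil]; exact Nat.lt_succ_self _
      _ = G.dist i r := hp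
  choose! f hadj hlt using hcloser
  have hne : ∀ i ≠ r, Function.update f r r i = f i := fun i hi => Function.update_of_ne hi ..
  have hf : IsParentMap r (Function.update f r r) :=
    .of_map_lt (G.dist · r) (Function.update_self ..) fun i hi => hne i hi ▸ hlt i hi
  exact ⟨_, hf, hf.parentGraph_le_iff.2 fun i hi => hne i hi ▸ hadj i hi⟩

theorem bijOn_parentGraph {V : Type*} [Finite V] (G : SimpleGraph V) (r : V) :
    Set.BijOn parentGraph {f | IsParentMap r f ∧ parentGraph f ≤ G} {T | T ≤ G ∧ T.IsTree} := by
  refine ⟨fun f hf => ⟨hf.2, hf.1.isTree_parentGraph⟩,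
    fun f hf g hg => hf.1.eq_of_parentGraph_eq hg.1, fun T ⟨hTG, hT⟩ => ?_⟩
  obtain ⟨f, hf, hfT⟩ := exists_isParentMap_parentGraph_le hT.connected r
  have hTf : T ≤ parentGraph f :=
    (SimpleGraph.isTree_iff_minimal_connected.1 hT).2 hf.connected_parentGraph hfT
  exact ⟨f, ⟨hf, hfT.trans hTG⟩, hfT.antisymm hTf⟩

section Laplacian

variable {V : Type*} [DecidableEq V] (R : Type*) [CommRing R]

/-- The Laplacian of the functional digraph `i ⟶ f i`, with row `r` replaced by `e_r`: the factor
contributed by the choice of parents `f` to the `(r, r)` minor of a graph Laplacian. -/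
def parentLaplacian (r : V) (f : V → V) : Matrix V V R :=
  Matrix.of fun i => Pi.single i 1 - if i = r then 0 else Pi.single (f i) 1

/-- The possible values at `i` of a parent map with root `r` whose tree lies in `G`. -/
def parentCandidates [Fintype V] (G : SimpleGraph V) [DecidableRel G.Adj] (r i : V) : Finset V :=
  if i = r then {r} else G.neighborFinset i

variable {R}

theorem parentLaplacian_apply (r : V) (f : V → V) (i j : V) :
    parentLaplacian R r f i j =
      (if j = i then 1 else 0) - if i = r then 0 else if j = f i then 1 else 0 := by
  by_cases hi : i = r <;> simp [parentLaplacian, hi, Pi.single_apply]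

variable [Fintype V]

theorem parentLaplacian_mulVec_apply (r : V) (f : V → V) (v : V → R) (i : V) :
    (parentLaplacian R r f).mulVec v i = v i - if i = r then 0 else v (f i) := by
  change (Pi.single i 1 - if i = r then 0 else Pi.single (f i) 1) ⬝ᵥ v = _
  by_cases hi : i = r <;> simp [sub_dotProduct, hi]

theorem IsParentMap.det_parentLaplacian {r : V} {f : V → V} (hf : IsParentMap r f) :
    (parentLaplacian R r f).det = 1 := by
  obtain ⟨d, hd⟩ := hf.exists_map_lt
  refine det_eq_one_of_diag_eq_one_of_lt d (fun i => ?_) fun i j hij hne => ?_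
  · by_cases hi : i = r
    · simp [parentLaplacian_apply, hi]
    · have hfi : i ≠ f i := (hf.adj_map hi).ne
      simp [parentLaplacian_apply, hfi]
  · simp only [parentLaplacian_apply, hij.symm, if_false, zero_sub, neg_ne_zero, ne_eq,
      ite_eq_left_iff, ite_eq_right_iff, not_forall] at hne
    obtain ⟨hi, rfl, -⟩ := hne
    exact hd i hi

theorem det_parentLaplacian_of_not_isParentMap {r : V} {f : V → V} (hr : f r = r)
    (hf : ¬ IsParentMap r f) : (parentLaplacian R r f).det = 0 := by
  classical
  obtain ⟨i₀, hi₀⟩ : ∃ i, ¬ ∃ m, f^[m] i = r := not_forall.1 fun h => hf ⟨hr, h⟩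
  have hker : (parentLaplacian R r f).mulVec (fun i => if ∃ m, f^[m] i = r then 0 else 1) = 0 := by
    funext i
    rw [parentLaplacian_mulVec_apply]
    by_cases hi : i = r
    · have hreach : ∃ m, f^[m] i = r := ⟨0, hi⟩
      rw [if_pos hreach, if_pos hi, sub_self, Pi.zero_apply]
    · have hiff : (∃ m, f^[m] i = r) ↔ ∃ m, f^[m] (f i) = r := by
        rw [← Nat.or_exists_add_one]
        exact or_iff_right hi
      simp [hi, hiff]
  simpa [hi₀] using congrFun (det_smul_eq_zero_of_mulVec_eq_zero hker) i₀

variable (G : SimpleGraph V) [DecidableRel G.Adj]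

theorem mem_piFinset_parentCandidates {r : V} {f : V → V} :
    f ∈ Fintype.piFinset (parentCandidates G r) ↔ f r = r ∧ ∀ i ≠ r, G.Adj i (f i) := by
  rw [Fintype.mem_piFinset]
  refine ⟨fun hf => ⟨by simpa [parentCandidates] using hf r,
    fun i hi => by simpa [parentCandidates, hi] using hf i⟩, fun ⟨hr, hadj⟩ i => ?_⟩
  by_cases hi : i = r
  · simp [parentCandidates, hi, hr]
  · simpa [parentCandidates, hi] using hadj i hi

theorem lapMatrix_row (i : V) :
    G.lapMatrix R i = ∑ j ∈ G.neighborFinset i, (Pi.single i 1 - Pi.single j 1) := by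
  ext k
  simp [SimpleGraph.lapMatrix, SimpleGraph.degMatrix, Matrix.diagonal_apply,
    SimpleGraph.adjMatrix_apply, Pi.single_apply, eq_comm]

theorem adjugate_lapMatrix_apply_self_eq_sum (r : V) :
    (G.lapMatrix R).adjugate r r =
      ∑ f ∈ Fintype.piFinset (parentCandidates G r), (parentLaplacian R r f).det := by
  have hrow : (G.lapMatrix R).updateRow r (Pi.single r 1) = fun i =>
      ∑ j ∈ parentCandidates G r i, (Pi.single i 1 - if i = r then 0 else Pi.single j 1) := by
    funext i
    by_cases hi : i = r
    · simp [parentCandidates, hi]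
    · simp [parentCandidates, hi, Matrix.updateRow_ne, lapMatrix_row]
  rw [Matrix.adjugate_apply, hrow]
  exact Matrix.detRowAlternating.toMultilinearMap.map_sum_finset _ _

variable (R) in
theorem adjugate_lapMatrix_apply_self (r : V) :
    (G.lapMatrix R).adjugate r r = ({T : SimpleGraph V | T ≤ G ∧ T.IsTree}.ncard : R) := by
  classical
  have hdet : ∀ f ∈ Fintype.piFinset (parentCandidates G r),
      (parentLaplacian R r f).det = if IsParentMap r f then 1 else 0 := by
    intro f hf
    split_ifs with hfr
    · exact hfr.det_parentLaplacian
    · exact det_parentLaplacian_of_not_isParentMap ((mem_piFinset_parentCandidates G).1 hf).1 hfr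
  have hset : {f | IsParentMap r f ∧ parentGraph f ≤ G} =
      ((Fintype.piFinset (parentCandidates G r)).filter (IsParentMap r) : Set (V → V)) := by
    ext f
    rw [coe_filter, Set.mem_ofPred_eq, Set.mem_ofPred_eq, mem_piFinset_parentCandidates, and_comm]
    exact and_congr_left fun hf => by rw [hf.parentGraph_le_iff, and_iff_right hf.map_root]
  rw [adjugate_lapMatrix_apply_self_eq_sum, sum_congr rfl hdet, sum_boole,
    ← (bijOn_parentGraph G r).ncard_eq, hset, Set.ncard_coe_finset]

variable (R) in
theorem trace_adjugate_lapMatrix :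
    (G.lapMatrix R).adjugate.trace =
      Fintype.card V * ({T : SimpleGraph V | T ≤ G ∧ T.IsTree}.ncard : R) := by
  simp [Matrix.trace, adjugate_lapMatrix_apply_self]

theorem det_lapMatrix [Nonempty V] : (G.lapMatrix R).det = 0 := by
  have hker : (G.lapMatrix R).mulVec (fun _ => 1) = 0 := G.lapMatrix_mulVec_const_eq_zero
  simpa using congrFun (det_smul_eq_zero_of_mulVec_eq_zero hker) (Classical.arbitrary V)

end Laplacian

section Spectrum

theorem trace_adjugate_conj {V R : Type*} [Fintype V] [DecidableEq V] [CommRing R]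
    {P Q : Matrix V V R} (hQP : Q * P = 1) (A : Matrix V V R) :
    (P * A * Q).adjugate.trace = A.adjugate.trace := by
  rw [Matrix.adjugate_mul_distrib, Matrix.adjugate_mul_distrib, Matrix.trace_mul_comm, mul_assoc,
    ← Matrix.adjugate_mul_distrib, hQP, Matrix.adjugate_one, mul_one]

variable {V 𝕜 : Type*} [Fintype V] [DecidableEq V] [RCLike 𝕜] {A : Matrix V V 𝕜}

theorem trace_adjugate_eq_sum_prod_eigenvalues (hA : A.IsHermitian) :
    A.adjugate.trace = ∑ i, ∏ j ∈ univ.erase i, (hA.eigenvalues j : 𝕜) := by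
  have hspectral := hA.spectral_theorem.trans (Unitary.conjStarAlgAut_apply ..)
  have htrace := congrArg (fun B : Matrix V V 𝕜 => B.adjugate.trace) hspectral
  rw [htrace, trace_adjugate_conj (Unitary.coe_star_mul_self _), Matrix.adjugate_diagonal,
    Matrix.trace_diagonal]
  rfl

theorem trace_adjugate_eq_prod_eigenvalues_erase (hA : A.IsHermitian) {i : V}
    (hi : hA.eigenvalues i = 0) :
    A.adjugate.trace = ∏ j ∈ univ.erase i, (hA.eigenvalues j : 𝕜) := by
  rw [trace_adjugate_eq_sum_prod_eigenvalues hA]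
  exact Fintype.sum_eq_single i fun k hk =>
    prod_eq_zero (mem_erase.2 ⟨hk.symm, mem_univ i⟩) (by rw [hi, RCLike.ofReal_zero])

open scoped ComplexOrder in
theorem eigenvalues_eq_zero_of_det_eq_zero_of_forall_le (hA : A.PosSemidef) (hdet : A.det = 0)
    {i : V} (hi : ∀ j, hA.isHermitian.eigenvalues i ≤ hA.isHermitian.eigenvalues j) :
    hA.isHermitian.eigenvalues i = 0 := by
  rw [hA.isHermitian.det_eq_prod_eigenvalues, prod_eq_zero_iff] at hdet
  obtain ⟨j, -, hj⟩ := hdet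
  exact ((hi j).trans_eq (RCLike.ofReal_eq_zero.1 hj)).antisymm (hA.eigenvalues_nonneg i)

end Spectrum

theorem card_spanningTrees_eq_general {V ι : Type*} [Fintype V] [DecidableEq V] [Fintype ι]
    [DecidableEq ι] (G : SimpleGraph V) [DecidableRel G.Adj] (hL : (G.lapMatrix ℝ).IsHermitian)
    (μ : ι → ℝ) (hperm : ∃ σ : ι ≃ V, hL.eigenvalues ∘ σ = μ) {b : ι} (hb : ∀ k, μ b ≤ μ k) :
    ({T : SimpleGraph V | T ≤ G ∧ T.IsTree}.ncard : ℝ) =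
      (1 / (Fintype.card V : ℝ)) * ∏ k ∈ univ.filter (fun k => k ≠ b), μ k := by
  obtain ⟨σ, rfl⟩ := hperm
  have : Nonempty V := ⟨σ b⟩
  have hzero : hL.eigenvalues (σ b) = 0 :=
    eigenvalues_eq_zero_of_det_eq_zero_of_forall_le (G.posSemidef_lapMatrix ℝ) (det_lapMatrix G)
      (σ.forall_congr_right.1 hb)
  have hprod : ∏ k ∈ univ.filter (fun k => k ≠ b), hL.eigenvalues (σ k) =
      ∏ i ∈ univ.erase (σ b), hL.eigenvalues i :=
    prod_equiv σ (by simp) (by simp)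
  have htrace := trace_adjugate_eq_prod_eigenvalues_erase hL hzero
  rw [trace_adjugate_lapMatrix] at htrace
  simp only [Function.comp_apply, hprod]
  have hcard : (Fintype.card V : ℝ) ≠ 0 := Nat.cast_ne_zero.2 Fintype.card_ne_zero
  rw [one_div, eq_inv_mul_iff_mul_eq₀ hcard]
  exact htrace

/-- **Matrix-tree theorem.**  For a finite simple connected graph on `n ≥ 2` vertices
with combinatorial Laplacian eigenvalues `0 = λ₁ < λ₂ ≤ ⋯ ≤ λₙ` (here `μ` is a monotone
enumeration of the eigenvalues), the number of spanning trees (spanning subgraphs that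
are connected and acyclic) equals `(1/n) ∏_{k=2}^{n} λₖ`. -/
theorem card_spanningTrees_eq
    {n : ℕ} (hn : 1 < n) (G : SimpleGraph (Fin n)) [DecidableRel G.Adj]
    (hG : G.Connected)
    (hL : (G.lapMatrix ℝ).IsHermitian)
    (μ : Fin n → ℝ) (hmono : Monotone μ)
    (hperm : ∃ σ : Equiv.Perm (Fin n), hL.eigenvalues ∘ σ = μ) :
    (({T : SimpleGraph (Fin n) | T ≤ G ∧ T.IsTree}).ncard : ℝ) =
      (1 / (n : ℝ)) * ∏ k ∈ Finset.univ.filter (fun k : Fin n => k ≠ ⟨0, by omega⟩), μ k := by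
  simpa using card_spanningTrees_eq_general G hL μ hperm (b := ⟨0, by omega⟩)
    fun k => hmono (Fin.mk_le_of_le_val k.val.zero_le)
end

section
/- Let $G$ be a finite simple connected graph. For each vertex $i$, define the link resistance curvature $\rho_i = 1 - \frac{1}{2} \sum_{j \in N(i)} \omega(i,j)$, where the sum is over the neighbors of $i$. Then the total resistance curvature satisfies $\sum_{i \in V} \rho_i = 1$. -/
/-!
Summing `(eᵢ - eⱼ)(eᵢ - eⱼ)ᵀ` over ordered pairs of adjacent vertices gives `2L`, so pairing with
any matrix `M` turns the total resistance of these pairs into `2 tr (L M)`. When `L M L = L`, the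
matrix `L M` is a projection onto the range of `L`, so its trace is the rank of `L`, the number of
vertices minus the number of connected components (Foster's theorem).
-/

open Matrix Finset

/-- `B` is the Moore–Penrose pseudoinverse of `A` (the four Penrose conditions; for any
real matrix such a `B` exists and is unique). -/
def IsMoorePenroseInverse {m : Type*} [Fintype m] (A B : Matrix m m ℝ) : Prop :=
  A * B * A = A ∧ B * A * B = B ∧ (A * B)ᵀ = A * B ∧ (B * A)ᵀ = B * A

/-- The effective resistance `ω(i,j) = (eᵢ - eⱼ)ᵀ L† (eᵢ - eⱼ)`, expressed via any matrix
`M` (in applications, the Moore–Penrose pseudoinverse `L†` of the Laplacian). -/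
noncomputable def effectiveResistance {n : ℕ} (M : Matrix (Fin n) (Fin n) ℝ)
    (i j : Fin n) : ℝ :=
  (Pi.single i (1 : ℝ) - Pi.single j 1) ⬝ᵥ M.mulVec (Pi.single i (1 : ℝ) - Pi.single j 1)

section Matrix

variable {m n K : Type*} [Fintype m] [Fintype n] [Field K]

theorem trace_eq_rank_of_isIdempotentElem {P : Matrix n n K} (hP : IsIdempotentElem P) :
    P.trace = P.rank := by
  classical
  have hproj : IsIdempotentElem P.toLin' := hP.map Matrix.toLinAlgEquiv'
  rw [← Matrix.trace_toLin'_eq, (LinearMap.IsIdempotentElem.isProj_range _ hproj).trace]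
  rfl

theorem trace_mul_eq_rank_of_mul_mul_eq {A : Matrix m n K} {B : Matrix n m K}
    (h : A * B * A = A) : (A * B).trace = A.rank := by
  have hrank : (A * B).rank = A.rank := by
    refine (rank_mul_le_left A B).antisymm ?_
    simpa only [h] using rank_mul_le_left (A * B) A
  have hidem : IsIdempotentElem (A * B) := by
    rw [IsIdempotentElem, ← Matrix.mul_assoc, h]
  rw [trace_eq_rank_of_isIdempotentElem hidem, hrank]

end Matrix

/-- The vector `eᵢ - eⱼ`: a unit current entering the network at `i` and leaving it at `j`.
It states resistances, as values of a quadratic form, on vertex types other than `Fin n`. -/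
def dipole {V : Type*} [DecidableEq V] (R : Type*) [Ring R] (i j : V) : V → R :=
  Pi.single i 1 - Pi.single j 1

theorem effectiveResistance_eq_dipole {n : ℕ} (M : Matrix (Fin n) (Fin n) ℝ) (i j : Fin n) :
    effectiveResistance M i j = dipole ℝ i j ⬝ᵥ M *ᵥ dipole ℝ i j :=
  rfl

theorem vecMulVec_dipole_self {V R : Type*} [DecidableEq V] [Ring R] (i j : V) :
    vecMulVec (dipole R i j) (dipole R i j) =
      Matrix.single i i 1 + Matrix.single j j 1 - Matrix.single i j 1 - Matrix.single j i 1 := by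
  simp only [dipole, sub_vecMulVec, vecMulVec_sub, ← single_eq_single_vecMulVec_single]
  abel

theorem card_connectedComponent_eq_one {V : Type*} {G : SimpleGraph V} (hG : G.Connected) :
    Nat.card G.ConnectedComponent = 1 :=
  have := hG.nonempty
  Nat.card_eq_one_iff_unique.mpr ⟨hG.preconnected.subsingleton_connectedComponent, inferInstance⟩

section Laplacian

variable {V : Type*} [Fintype V] (G : SimpleGraph V) [DecidableRel G.Adj]

theorem sum_neighborFinset_comm {α : Type*} [AddCommMonoid α] (f : V → V → α) :
    ∑ i, ∑ j ∈ G.neighborFinset i, f i j = ∑ i, ∑ j ∈ G.neighborFinset i, f j i :=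
  sum_comm' fun i j => by simp [G.adj_comm]

variable [DecidableEq V]

theorem sum_neighborFinset_single_self (R : Type*) [AddCommMonoidWithOne R] :
    ∑ i, ∑ _j ∈ G.neighborFinset i, Matrix.single i i (1 : R) = G.degMatrix R := by
  simp [SimpleGraph.degMatrix, sum_single_eq_diagonal]

theorem sum_neighborFinset_single (R : Type*) [AddCommMonoidWithOne R] :
    ∑ i, ∑ j ∈ G.neighborFinset i, Matrix.single i j (1 : R) = G.adjMatrix R := by
  rw [matrix_eq_sum_single (G.adjMatrix R)]
  refine sum_congr rfl fun i _ => ?_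
  simp [SimpleGraph.neighborFinset_eq_filter, sum_filter, apply_ite (Matrix.single i _)]

theorem sum_vecMulVec_dipole_self (R : Type*) [Ring R] :
    ∑ i, ∑ j ∈ G.neighborFinset i, vecMulVec (dipole R i j) (dipole R i j) =
      2 • G.lapMatrix R := by
  simp only [vecMulVec_dipole_self, sum_sub_distrib, sum_add_distrib]
  rw [sum_neighborFinset_comm G fun _ j => Matrix.single j j 1,
    sum_neighborFinset_comm G fun i j => Matrix.single j i 1,
    sum_neighborFinset_single_self, sum_neighborFinset_single, SimpleGraph.lapMatrix]
  abel

theorem sum_dipole_dotProduct_mulVec {R : Type*} [CommRing R] (M : Matrix V V R) :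
    ∑ i, ∑ j ∈ G.neighborFinset i, dipole R i j ⬝ᵥ M *ᵥ dipole R i j =
      2 * (G.lapMatrix R * M).trace := by
  calc ∑ i, ∑ j ∈ G.neighborFinset i, dipole R i j ⬝ᵥ M *ᵥ dipole R i j
      = ((∑ i, ∑ j ∈ G.neighborFinset i, vecMulVec (dipole R i j) (dipole R i j)) * M).trace := by
        simp only [Matrix.sum_mul, trace_sum, vecMulVec_mul, trace_vecMulVec, dotProduct_mulVec,
          dotProduct_comm]
    _ = 2 * (G.lapMatrix R * M).trace := by
        rw [sum_vecMulVec_dipole_self, smul_mul, trace_smul, nsmul_eq_mul, Nat.cast_ofNat]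

theorem rank_lapMatrix_add_card_connectedComponent :
    (G.lapMatrix ℝ).rank + Nat.card G.ConnectedComponent = Fintype.card V := by
  classical
  rw [Nat.card_eq_fintype_card, G.card_connectedComponent_eq_finrank_ker_toLin'_lapMatrix,
    ← Module.finrank_fintype_fun_eq_card ℝ]
  exact (G.lapMatrix ℝ).toLin'.finrank_range_add_finrank_ker

/-- For adjacent `i` and `j` the vector `eᵢ - eⱼ` lies in the range of the symmetric matrix `L`, so
every `M` with `L M L = L` gives the same value as the pseudoinverse `L†`. -/
theorem sum_link_resistance_curvature_eq_one_general (M : Matrix V V ℝ)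
    (hM : G.lapMatrix ℝ * M * G.lapMatrix ℝ = G.lapMatrix ℝ) :
    ∑ i, (1 - (1 / 2) * ∑ j ∈ G.neighborFinset i, dipole ℝ i j ⬝ᵥ M *ᵥ dipole ℝ i j) =
      Nat.card G.ConnectedComponent := by
  have htrace : (G.lapMatrix ℝ * M).trace = (G.lapMatrix ℝ).rank :=
    trace_mul_eq_rank_of_mul_mul_eq hM
  have hcard : ((G.lapMatrix ℝ).rank : ℝ) + Nat.card G.ConnectedComponent = Fintype.card V :=
    mod_cast rank_lapMatrix_add_card_connectedComponent G
  rw [sum_sub_distrib, ← mul_sum, sum_dipole_dotProduct_mulVec, htrace, sum_const, card_univ,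
    nsmul_one]
  linarith

end Laplacian

/-- **The total link resistance curvature is `1`.**  For a finite simple connected graph,
with `ρᵢ = 1 - (1/2) ∑_{j ∈ N(i)} ω(i,j)` the link resistance curvature of vertex `i`,
we have `∑ᵢ ρᵢ = 1`. -/
theorem sum_link_resistance_curvature_eq_one
    {n : ℕ} (G : SimpleGraph (Fin n)) [DecidableRel G.Adj] (hG : G.Connected)
    (M : Matrix (Fin n) (Fin n) ℝ)
    (hM : IsMoorePenroseInverse (G.lapMatrix ℝ) M) :
    ∑ i : Fin n,
        (1 - (1 / 2) * ∑ j ∈ G.neighborFinset i, effectiveResistance M i j) = 1 := by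
  simpa only [effectiveResistance_eq_dipole, card_connectedComponent_eq_one hG, Nat.cast_one] using
    sum_link_resistance_curvature_eq_one_general G M hM.1
end
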